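/- (Norm duality for l^r-Herz type mixed-norm spaces.) Let r ∈ [1,∞], n ∈ ℕ, p⃗, q⃗ ∈ [1,∞]^n, and α⃗ ∈ ℝⁿ. Then for every sequence f = {f(j,·)}_{j∈ℤ} of measurable functions on ℝⁿ, ‖f‖_{(Ė^{α⃗,p⃗}_{q⃗}(ℝⁿ), l^r)} = sup{ ‖ Σ_{j∈ℤ} |f(j,·) g(j,·)| ‖_{L¹(ℝⁿ)} : g ∈ (Ė^{-α⃗,p⃗'}_{q⃗'}(ℝⁿ), l^{r'}) with ‖g‖_{(Ė^{-α⃗,p⃗'}_{q⃗'}(ℝⁿ), l^{r'})} = 1 }. -/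

import Mathlib

open MeasureTheory ENNReal Filter

noncomputable section

/-- The dyadic annulus `R_k = (-2^k, 2^k) \ (-2^(k-1), 2^(k-1))` in `ℝ`. -/
def herzRing (k : ℤ) : Set ℝ :=
  Set.Ioo (-(2 : ℝ) ^ k) ((2 : ℝ) ^ k) \ Set.Ioo (-(2 : ℝ) ^ (k - 1)) ((2 : ℝ) ^ (k - 1))

/-- The `L^q` "norm" (valued in `ℝ≥0∞`) of an `ℝ≥0∞`-valued function on a set `s ⊆ ℝ`,
with the usual modification when `q = ∞`. -/
def lqNormOn (q : ℝ≥0∞) (s : Set ℝ) (g : ℝ → ℝ≥0∞) : ℝ≥0∞ :=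
  if q = ∞ then essSup (s.indicator g) volume
  else (∫⁻ x in s, g x ^ q.toReal) ^ (1 / q.toReal)

/-- The `l^p` norm over `ℤ` of an `ℝ≥0∞`-valued sequence, with the usual modification
when `p = ∞`. -/
def lpZNorm (p : ℝ≥0∞) (a : ℤ → ℝ≥0∞) : ℝ≥0∞ :=
  if p = ∞ then ⨆ k, a k
  else (∑' k : ℤ, a k ^ p.toReal) ^ (1 / p.toReal)

/-- The one-dimensional Herz norm `K^{α,p}_q` of an `ℝ≥0∞`-valued function on `ℝ`. -/
def herzNorm1 (α : ℝ) (p q : ℝ≥0∞) (g : ℝ → ℝ≥0∞) : ℝ≥0∞ :=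
  lpZNorm p fun k => ENNReal.ofReal ((2 : ℝ) ^ ((k : ℝ) * α)) * lqNormOn q (herzRing k) g

/-- The mixed-norm Herz norm on `ℝⁿ` of an `ℝ≥0∞`-valued function: the Herz norm
`K^{α_1,p_1}_{q_1}` is applied in the first variable, then `K^{α_2,p_2}_{q_2}` in the
second variable, …, and finally `K^{α_n,p_n}_{q_n}` in the last variable. -/
def mixedHerzNormE : (n : ℕ) → (Fin n → ℝ) → (Fin n → ℝ≥0∞) → (Fin n → ℝ≥0∞) →
    ((Fin n → ℝ) → ℝ≥0∞) → ℝ≥0∞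
  | 0, _, _, _, f => f fun i => i.elim0
  | n + 1, α, p, q, f =>
    herzNorm1 (α (Fin.last n)) (p (Fin.last n)) (q (Fin.last n)) fun xlast =>
      mixedHerzNormE n (Fin.init α) (Fin.init p) (Fin.init q) fun y => f (Fin.snoc y xlast)

/-- The mixed-norm Herz norm `‖f‖_{Ė^{α,p}_q(ℝⁿ)}` of a complex-valued function on `ℝⁿ`. -/
def herzNormC (n : ℕ) (α : Fin n → ℝ) (p q : Fin n → ℝ≥0∞) (f : (Fin n → ℝ) → ℂ) : ℝ≥0∞ :=
  mixedHerzNormE n α p q fun x => (‖f x‖₊ : ℝ≥0∞)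

/-- `I_m = (-2^m, -2^{-m}] ∪ [2^{-m}, 2^m)`. -/
def herzI (m : ℕ) : Set ℝ :=
  Set.Ioc (-(2 : ℝ) ^ (m : ℤ)) (-(2 : ℝ) ^ (-(m : ℤ))) ∪
    Set.Ico ((2 : ℝ) ^ (-(m : ℤ))) ((2 : ℝ) ^ (m : ℤ))

/-- `A_m = I_m^n ⊆ ℝⁿ`. -/
def herzA (n m : ℕ) : Set (Fin n → ℝ) := Set.univ.pi fun _ => herzI m

/-- The class `H(ℝⁿ)` of simple functions built from finitely many pairwise disjoint
parallelepipeds contained in some `A_m`. -/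
def IsHSimple (n : ℕ) (f : (Fin n → ℝ) → ℂ) : Prop :=
  ∃ (m N : ℕ) (a : Fin N → ℂ) (E : Fin N → Fin n → Set ℝ),
    (∀ k i, MeasurableSet (E k i)) ∧
    (∀ k, Set.univ.pi (E k) ⊆ herzA n m) ∧
    (Pairwise fun k l => Disjoint (Set.univ.pi (E k)) (Set.univ.pi (E l))) ∧
    f = fun x => ∑ k, (Set.univ.pi (E k)).indicator (fun _ => a k) x

/-- The Euclidean ball `B(x,r)` in `ℝⁿ`. -/
def eucBall (n : ℕ) (x : Fin n → ℝ) (r : ℝ) : Set (Fin n → ℝ) :=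
  {y | ∑ i, (y i - x i) ^ 2 < r ^ 2}

/-- The (uncentered) maximal operator in the `k`-th variable. -/
def maxVar (n : ℕ) (k : Fin n) (g : (Fin n → ℝ) → ℝ≥0∞) : (Fin n → ℝ) → ℝ≥0∞ :=
  fun x => ⨆ (a : ℝ) (b : ℝ) (_ : x k ∈ Set.Ioo a b),
    (volume (Set.Ioo a b))⁻¹ * ∫⁻ y in Set.Ioo a b, g (Function.update x k y)

/-- The centered Hardy–Littlewood maximal operator on `ℝⁿ`. -/
def centeredMax (n : ℕ) (g : (Fin n → ℝ) → ℝ≥0∞) : (Fin n → ℝ) → ℝ≥0∞ :=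
  fun x => ⨆ (r : ℝ) (_ : 0 < r),
    (volume (eucBall n x r))⁻¹ * ∫⁻ y in eucBall n x r, g y

/-- The composition `M_n ∘ ⋯ ∘ M_1` of the maximal operators in each variable. -/
def iteratedMax (n : ℕ) (g : (Fin n → ℝ) → ℝ≥0∞) : (Fin n → ℝ) → ℝ≥0∞ :=
  (List.ofFn fun k : Fin n => maxVar n k).foldl (fun h F => F h) g

/-- The iterated maximal operator `ℳ_t(f) = [M_n ⋯ M_1(|f|^t)]^{1/t}`. -/
def iterMaxPow (n : ℕ) (t : ℝ) (f : (Fin n → ℝ) → ℂ) : (Fin n → ℝ) → ℝ≥0∞ :=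
  fun x => iteratedMax n (fun y => (‖f y‖₊ : ℝ≥0∞) ^ t) x ^ (1 / t)

/-- The `l^r`-Herz type mixed norm of a sequence of functions on `ℝⁿ`. -/
def herzSeqNorm (n : ℕ) (r : ℝ≥0∞) (α : Fin n → ℝ) (p q : Fin n → ℝ≥0∞)
    (F : ℤ → (Fin n → ℝ) → ℂ) : ℝ≥0∞ :=
  mixedHerzNormE n α p q fun x => lpZNorm r fun j => (‖F j x‖₊ : ℝ≥0∞)

/-- `N` is a ball quasi-Banach function norm on (nonnegative extended-real-valued)
measurable functions on `ℝⁿ`. -/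
def IsBQBFNorm (n : ℕ) (N : ((Fin n → ℝ) → ℝ≥0∞) → ℝ≥0∞) : Prop :=
  (∀ f : (Fin n → ℝ) → ℝ≥0∞, Measurable f → N f = 0 → f =ᵐ[volume] 0) ∧
  (∀ f g : (Fin n → ℝ) → ℝ≥0∞, Measurable f → Measurable g →
    (∀ᵐ x ∂volume, g x ≤ f x) → N g ≤ N f) ∧
  (∀ (fm : ℕ → (Fin n → ℝ) → ℝ≥0∞) (f : (Fin n → ℝ) → ℝ≥0∞),
    (∀ m, Measurable (fm m)) → Measurable f →
    (∀ᵐ x ∂volume, Monotone (fun m => fm m x) ∧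
      Tendsto (fun m => fm m x) atTop (nhds (f x))) →
    Monotone (fun m => N (fm m)) ∧ Tendsto (fun m => N (fm m)) atTop (nhds (N f))) ∧
  (∀ (x : Fin n → ℝ) (r : ℝ), 0 < r →
    N ((eucBall n x r).indicator fun _ => (1 : ℝ≥0∞)) ≠ ∞)

/-- `N` is a ball Banach function norm: a ball quasi-Banach function norm that moreover
satisfies the triangle inequality and locally dominates the `L¹` norm. -/
def IsBallBanachNorm (n : ℕ) (N : ((Fin n → ℝ) → ℝ≥0∞) → ℝ≥0∞) : Prop :=
  IsBQBFNorm n N ∧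
  (∀ f g : (Fin n → ℝ) → ℝ≥0∞, Measurable f → Measurable g → N (f + g) ≤ N f + N g) ∧
  (∀ (x : Fin n → ℝ) (r : ℝ), 0 < r → ∃ C : ℝ≥0∞, 0 < C ∧ C ≠ ∞ ∧
    ∀ f : (Fin n → ℝ) → ℝ≥0∞, Measurable f → (∫⁻ y in eucBall n x r, f y) ≤ C * N f)

/-- The associate (Köthe dual) norm of a function norm `N`. -/
def assocNormOf (n : ℕ) (N : ((Fin n → ℝ) → ℝ≥0∞) → ℝ≥0∞)
    (f : (Fin n → ℝ) → ℝ≥0∞) : ℝ≥0∞ :=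
  ⨆ (g : (Fin n → ℝ) → ℝ≥0∞) (_ : Measurable g) (_ : N g = 1), ∫⁻ x, f x * g x

/-- The `θ`-convexification of a function norm: `‖f‖_{X^θ} = ‖|f|^θ‖_X^{1/θ}`
(here stated with `θ` in place of `1/p`, so `X^{1/p}` is `convexPow n (1/p) N`). -/
def convexPow (n : ℕ) (θ : ℝ) (N : ((Fin n → ℝ) → ℝ≥0∞) → ℝ≥0∞)
    (f : (Fin n → ℝ) → ℝ≥0∞) : ℝ≥0∞ :=
  N (fun x => f x ^ θ) ^ (1 / θ)

/-- The associate space norm of the mixed-norm Herz space, for complex-valued functions. -/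
def herzAssocNormC (n : ℕ) (α : Fin n → ℝ) (p q : Fin n → ℝ≥0∞)
    (f : (Fin n → ℝ) → ℂ) : ℝ≥0∞ :=
  ⨆ (g : (Fin n → ℝ) → ℂ) (_ : Measurable g) (_ : herzNormC n α p q g = 1),
    ∫⁻ x, (‖f x * g x‖₊ : ℝ≥0∞)

structure HCore {X : Type} [MeasurableSpace X] (μ : Measure X)
    (N N' : (X → ℝ≥0∞) → ℝ≥0∞) : Prop where
  holder : ∀ f g, Measurable f → Measurable g → ∫⁻ x, f x * g x ∂μ ≤ N f * N' g
  mono : ∀ f g, (∀ x, f x ≤ g x) → N' f ≤ N' g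
  smul : ∀ c : ℝ≥0∞, c ≠ ∞ → ∀ f, N' (fun x => c * f x) = c * N' f
  norming : ∀ (Z : Type) [MeasurableSpace Z] (f : Z × X → ℝ≥0∞), Measurable f →
    ∃ g : ℕ → Z × X → ℝ≥0∞, (∀ m, Measurable (g m)) ∧ (∀ m w, g m w ≠ ∞) ∧
      (∀ m z, N' (fun x => g m (z, x)) ≤ 1) ∧
      (∀ z, Monotone fun m => ∫⁻ x, f (z, x) * g m (z, x) ∂μ) ∧
      ∀ z, N (fun x => f (z, x)) ≤ ⨆ m, ∫⁻ x, f (z, x) * g m (z, x) ∂μ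

theorem lint_sec_meas {X Z : Type} [MeasurableSpace X] [MeasurableSpace Z] (μ : Measure X)
    [SFinite μ] (f g : Z × X → ℝ≥0∞) (hf : Measurable f) (hg : Measurable g) :
    Measurable fun z => ∫⁻ x, f (z, x) * g (z, x) ∂μ :=
  Measurable.lintegral_prod_right' (f := fun w => f w * g w) (hf.mul hg)

/-- gluing a countable family into a monotone sequence -/
theorem norming_glue {X Z : Type} [MeasurableSpace X] [MeasurableSpace Z] (μ : Measure X)
    [SFinite μ] (N N' : (X → ℝ≥0∞) → ℝ≥0∞) {ι : Type} [Countable ι] [Nonempty ι]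
    (f : Z × X → ℝ≥0∞) (hf : Measurable f)
    (g : ι → Z × X → ℝ≥0∞) (hg : ∀ m, Measurable (g m)) (hfin : ∀ m w, g m w ≠ ∞)
    (hN : ∀ m z, N' (fun x => g m (z, x)) ≤ 1)
    (hle : ∀ z, N (fun x => f (z, x)) ≤ ⨆ m, ∫⁻ x, f (z, x) * g m (z, x) ∂μ) :
    ∃ g : ℕ → Z × X → ℝ≥0∞, (∀ m, Measurable (g m)) ∧ (∀ m w, g m w ≠ ∞) ∧
      (∀ m z, N' (fun x => g m (z, x)) ≤ 1) ∧
      (∀ z, Monotone fun m => ∫⁻ x, f (z, x) * g m (z, x) ∂μ) ∧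
      ∀ z, N (fun x => f (z, x)) ≤ ⨆ m, ∫⁻ x, f (z, x) * g m (z, x) ∂μ := by
  classical
  obtain ⟨e, he⟩ := exists_surjective_nat ι
  let I : (Z × X → ℝ≥0∞) → Z → ℝ≥0∞ := fun u z => ∫⁻ x, f (z, x) * u (z, x) ∂μ
  let G : ℕ → Z × X → ℝ≥0∞ := fun m => Nat.rec (g (e 0))
    (fun m u => fun w => if I u w.1 ≤ I (g (e (m+1))) w.1 then g (e (m+1)) w else u w) m
  have G0 : G 0 = g (e 0) := rfl
  have GS : ∀ m, G (m+1) = fun w => if I (G m) w.1 ≤ I (g (e (m+1))) w.1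
      then g (e (m+1)) w else G m w := fun m => rfl
  have Gsec : ∀ m z, (∀ x, G (m+1) (z,x) = g (e (m+1)) (z,x)) ∧ I (G m) z ≤ I (g (e (m+1))) z ∨
      (∀ x, G (m+1) (z,x) = G m (z,x)) ∧ I (g (e (m+1))) z ≤ I (G m) z := by
    intro m z
    by_cases h : I (G m) z ≤ I (g (e (m+1))) z
    · left; refine ⟨fun x => ?_, h⟩
      rw [GS]; simp only [h, if_true]
    · right; refine ⟨fun x => ?_, (not_le.1 h).le⟩
      rw [GS]; simp only [h, if_false]
  have Gm : ∀ m, Measurable (G m) := by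
    intro m
    induction m with
    | zero => exact hg _
    | succ m ih =>
      rw [GS]
      refine Measurable.ite ?_ (hg _) ih
      exact measurableSet_le ((lint_sec_meas μ f _ hf ih).comp measurable_fst)
        ((lint_sec_meas μ f _ hf (hg _)).comp measurable_fst)
  have Icong : ∀ u v z, (∀ x, u (z,x) = v (z,x)) → I u z = I v z := by
    intro u v z h
    simp only [I, h]
  have Gmono : ∀ z, Monotone fun m => I (G m) z := by
    intro z
    apply monotone_nat_of_le_succ
    intro m
    rcases Gsec m z with ⟨h1, h2⟩ | ⟨h1, h2⟩
    · rw [Icong _ _ z h1]; exact h2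
    · rw [Icong _ _ z h1]
  have Gge : ∀ m z, I (g (e m)) z ≤ I (G m) z := by
    intro m z
    cases m with
    | zero => exact le_rfl
    | succ m =>
      rcases Gsec m z with ⟨h1, h2⟩ | ⟨h1, h2⟩
      · rw [Icong _ _ z h1]
      · rw [Icong _ _ z h1]; exact h2
  refine ⟨G, Gm, ?_, ?_, Gmono, ?_⟩
  · intro m
    induction m with
    | zero => exact hfin _
    | succ m ih =>
      rintro ⟨z, x⟩
      rcases Gsec m z with ⟨h1, h2⟩ | ⟨h1, h2⟩
      · rw [h1]; exact hfin _ _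
      · rw [h1]; exact ih _
  · intro m
    induction m with
    | zero => exact hN _
    | succ m ih =>
      intro z
      rcases Gsec m z with ⟨h1, h2⟩ | ⟨h1, h2⟩
      · simp only [h1]; exact hN _ _
      · simp only [h1]; exact ih _
  · intro z
    refine (hle z).trans (iSup_le fun i => ?_)
    obtain ⟨m, rfl⟩ := he i
    exact (Gge m z).trans (le_iSup (fun m => I (G m) z) m)

theorem HCore.meas {X : Type} [MeasurableSpace X] {μ : Measure X} [SFinite μ]
    {N N' : (X → ℝ≥0∞) → ℝ≥0∞} (H : HCore μ N N') {Z : Type} [MeasurableSpace Z]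
    (f : Z × X → ℝ≥0∞) (hf : Measurable f) : Measurable fun z => N (fun x => f (z, x)) := by
  obtain ⟨g, gm, gf, g1, -, gs⟩ := H.norming Z f hf
  have : (fun z => N (fun x => f (z, x))) = fun z => ⨆ m, ∫⁻ x, f (z, x) * g m (z, x) ∂μ := by
    funext z
    refine le_antisymm (gs z) (iSup_le fun m => ?_)
    refine (H.holder _ _ (hf.comp measurable_prodMk_left) ((gm m).comp measurable_prodMk_left)).trans ?_
    exact (mul_le_mul_right (g1 m z) _).trans_eq (mul_one _)
  rw [this]
  exact Measurable.iSup fun m => lint_sec_meas μ f _ hf (gm m)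

theorem HCore.comp {X Y : Type} [MeasurableSpace X] [MeasurableSpace Y] {μ : Measure X}
    {ν : Measure Y} [SFinite μ] [SFinite ν]
    {N N' : (X → ℝ≥0∞) → ℝ≥0∞} {M M' : (Y → ℝ≥0∞) → ℝ≥0∞}
    (H : HCore μ N N') (K : HCore ν M M') (K' : HCore ν M' M) :
    HCore (μ.prod ν) (fun f => N fun x => M fun y => f (x, y))
      (fun f => N' fun x => M' fun y => f (x, y)) where
  holder f g hf hg := by
    rw [lintegral_prod (fun x => f x * g x) (hf.mul hg).aemeasurable]
    refine le_trans (lintegral_mono fun x => K.holder _ _ (hf.comp measurable_prodMk_left)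
      (hg.comp measurable_prodMk_left)) ?_
    exact H.holder _ _ (K.meas f hf) (K'.meas g hg)
  mono f g h := H.mono _ _ fun x => K.mono _ _ fun y => h _
  smul c hc f := by
    simp only [K.smul c hc, H.smul c hc]
  norming Z _ f hf := by
    let f' : (Z × X) × Y → ℝ≥0∞ := fun w => f (w.1.1, (w.1.2, w.2))
    have hf' : Measurable f' := hf.comp (by fun_prop)
    obtain ⟨g, gm, gf, g1, gmono, gs⟩ := K.norming (Z × X) f' hf'
    have hh := K.meas f' hf'
    obtain ⟨u, um, uf, u1, -, us⟩ := H.norming Z _ hh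
    have hprod : ∀ l m, Measurable fun w : Z × X × Y =>
        u l (w.1, w.2.1) * g m ((w.1, w.2.1), w.2.2) := fun l m =>
      ((um l).comp (by fun_prop)).mul ((gm m).comp (by fun_prop))
    refine norming_glue (ι := ℕ × ℕ) (μ.prod ν) (fun f => N fun x => M fun y => f (x, y))
      (fun f => N' fun x => M' fun y => f (x, y)) f hf
      (fun i w => u i.1 (w.1, w.2.1) * g i.2 ((w.1, w.2.1), w.2.2))
      (fun i => hprod _ _) (fun i w => ENNReal.mul_ne_top (uf _ _) (gf _ _)) ?_ ?_
    · rintro ⟨l, m⟩ z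
      simp only [K.smul _ (uf _ _)]
      refine le_trans (H.mono _ _ fun x => ?_) (u1 l z)
      calc _ ≤ u l (z, x) * 1 := by gcongr; exact g1 m (z, x)
        _ = _ := mul_one _
    · intro z
      refine (us z).trans (iSup_le fun l => ?_)
      have e1 : ∀ x, M (fun y => f (z, (x, y))) * u l (z, x) ≤
          ⨆ m, (∫⁻ y, f' ((z, x), y) * g m ((z, x), y) ∂ν) * u l (z, x) := by
        intro x
        rw [← ENNReal.iSup_mul]
        gcongr
        exact gs (z, x)
      refine (lintegral_mono e1).trans ?_
      have hI : ∀ m, Measurable fun x => (∫⁻ y, f' ((z, x), y) * g m ((z, x), y) ∂ν) * u l (z, x) := by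
        intro m
        exact ((lint_sec_meas ν f' _ hf' (gm m)).comp measurable_prodMk_left).mul
          ((um l).comp measurable_prodMk_left)
      rw [lintegral_iSup hI]
      · refine iSup_le fun m => ?_
        refine le_trans ?_ (le_iSup _ (l, m))
        rw [lintegral_prod (fun y => f (z, y) * (u l (z, y.1) * g m ((z, y.1), y.2)))
          ((hf.comp measurable_prodMk_left).mul
          ((hprod l m).comp measurable_prodMk_left)).aemeasurable]
        refine lintegral_mono fun x => ?_
        show _ ≤ ∫⁻ y, f (z, (x, y)) * (u l (z, x) * g m ((z, x), y)) ∂ν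
        rw [← lintegral_mul_const' _ _ (uf _ _)]
        refine lintegral_mono fun y => le_of_eq ?_
        show f (z, (x, y)) * g m ((z, x), y) * u l (z, x) = _
        ring
      · intro a b hab x
        exact mul_le_mul_left (gmono (z, x) hab) _

theorem HCore.transport {X Y : Type} [MeasurableSpace X] [MeasurableSpace Y] {μ : Measure X}
    {ν : Measure Y} [SFinite ν] {N N' : (X → ℝ≥0∞) → ℝ≥0∞} (H : HCore μ N N') (e : Y ≃ᵐ X)
    (he : MeasurePreserving e ν μ) :
    HCore ν (fun f => N fun x => f (e.symm x)) (fun f => N' fun x => f (e.symm x)) := by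
  have he' := he.symm
  refine ⟨?_, ?_, ?_, ?_⟩
  · intro f g hf hg
    rw [← he'.lintegral_comp_emb e.symm.measurableEmbedding]
    exact H.holder _ _ (hf.comp e.symm.measurable) (hg.comp e.symm.measurable)
  · intro f g h
    exact H.mono _ _ fun x => h _
  · intro c hc f
    exact H.smul c hc _
  · intro Z _ f hf
    obtain ⟨g, gm, gf, g1, gmono, gs⟩ := H.norming Z (fun w => f (w.1, e.symm w.2))
      (hf.comp (measurable_fst.prodMk (e.symm.measurable.comp measurable_snd)))
    have key : ∀ m z, ∫⁻ y, f (z, y) * g m (z, e y) ∂ν = ∫⁻ x, f (z, e.symm x) * g m (z, x) ∂μ := by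
      intro m z
      rw [← he'.lintegral_comp_emb e.symm.measurableEmbedding]
      simp
    refine ⟨fun m w => g m (w.1, e w.2), fun m => (gm m).comp
      (measurable_fst.prodMk (e.measurable.comp measurable_snd)), fun m w => gf _ _, ?_, ?_, ?_⟩
    · intro m z; simpa using g1 m z
    · intro z; simpa only [key] using gmono z
    · intro z; simpa only [key] using gs z

def LN {X : Type} [MeasurableSpace X] (q : ℝ≥0∞) (μ : Measure X) (g : X → ℝ≥0∞) : ℝ≥0∞ :=
  if q = ∞ then essSup g μ else (∫⁻ x, g x ^ q.toReal ∂μ) ^ (1 / q.toReal)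

theorem LN_top {X : Type} [MeasurableSpace X] (μ : Measure X) (g : X → ℝ≥0∞) :
    LN ∞ μ g = essSup g μ := by simp [LN]

theorem LN_one {X : Type} [MeasurableSpace X] (μ : Measure X) (g : X → ℝ≥0∞) :
    LN 1 μ g = ∫⁻ x, g x ∂μ := by simp [LN]

theorem conj_cases {q q' : ℝ≥0∞} (h : 1 / q + 1 / q' = 1) :
    (q = 1 ∧ q' = ∞) ∨ (q = ∞ ∧ q' = 1) ∨
      (q ≠ ∞ ∧ q' ≠ ∞ ∧ q.toReal.HolderConjugate q'.toReal) := by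
  simp only [one_div] at h
  by_cases h1 : q = ∞
  · subst h1; right; left; simpa using h
  by_cases h2 : q' = ∞
  · subst h2; left; simpa using h
  right; right
  have : ENNReal.HolderConjugate q q' := ⟨by simpa using h⟩
  exact ⟨h1, h2, ENNReal.HolderConjugate.toReal_of_ne_top h1 h2⟩

theorem LN_mono {X : Type} [MeasurableSpace X] (q : ℝ≥0∞) (μ : Measure X) (f g : X → ℝ≥0∞)
    (h : ∀ x, f x ≤ g x) : LN q μ f ≤ LN q μ g := by
  unfold LN
  split_ifs
  · exact essSup_mono_ae (Eventually.of_forall h)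
  · gcongr
    exact h _

theorem LN_smul {X : Type} [MeasurableSpace X] (q : ℝ≥0∞) (hq : q ≠ 0) (μ : Measure X) (c : ℝ≥0∞)
    (hc : c ≠ ∞) (f : X → ℝ≥0∞) : LN q μ (fun x => c * f x) = c * LN q μ f := by
  unfold LN
  split_ifs with h
  · exact ENNReal.essSup_const_mul
  · have hp : 0 < q.toReal := ENNReal.toReal_pos hq h
    simp only [ENNReal.mul_rpow_of_nonneg _ _ hp.le]
    rw [lintegral_const_mul' _ _ (ENNReal.rpow_ne_top_of_nonneg hp.le hc),
      ENNReal.mul_rpow_of_nonneg _ _ (by positivity), ← ENNReal.rpow_mul]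
    rw [mul_one_div_cancel hp.ne', ENNReal.rpow_one]

theorem LN_holder_one {X : Type} [MeasurableSpace X] (μ : Measure X) (f g : X → ℝ≥0∞)
    (hf : Measurable f) : ∫⁻ x, f x * g x ∂μ ≤ (∫⁻ x, f x ∂μ) * essSup g μ := by
  rw [← lintegral_mul_const _ hf]
  refine lintegral_mono_ae ?_
  filter_upwards [ENNReal.ae_le_essSup (μ := μ) g] with x hx
  gcongr

theorem LN_holder {X : Type} [MeasurableSpace X] (μ : Measure X) {q q' : ℝ≥0∞}
    (h : 1 / q + 1 / q' = 1) (f g : X → ℝ≥0∞)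
    (hf : Measurable f) (hg : Measurable g) :
    ∫⁻ x, f x * g x ∂μ ≤ LN q μ f * LN q' μ g := by
  rcases conj_cases h with ⟨rfl, rfl⟩ | ⟨rfl, rfl⟩ | ⟨h1, h2, h3⟩
  · rw [LN_one, LN_top]; exact LN_holder_one μ f g hf
  · rw [LN_one, LN_top, mul_comm]
    simp_rw [mul_comm (f _)]
    exact LN_holder_one μ g f hg
  · simp only [LN, h1, h2, if_false]
    exact ENNReal.lintegral_mul_le_Lp_mul_Lq μ h3 hf.aemeasurable hg.aemeasurable

theorem LN_norming_top {X : Type} [MeasurableSpace X] (μ : Measure X) [SigmaFinite μ]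
    (Z : Type) [MeasurableSpace Z] (f : Z × X → ℝ≥0∞) (hf : Measurable f) :
    ∃ g : ℕ → Z × X → ℝ≥0∞, (∀ m, Measurable (g m)) ∧ (∀ m w, g m w ≠ ∞) ∧
      (∀ m z, LN 1 μ (fun x => g m (z, x)) ≤ 1) ∧
      (∀ z, Monotone fun m => ∫⁻ x, f (z, x) * g m (z, x) ∂μ) ∧
      ∀ z, LN ∞ μ (fun x => f (z, x)) ≤ ⨆ m, ∫⁻ x, f (z, x) * g m (z, x) ∂μ := by
  classical
  let S := spanningSets μ
  have Sm : ∀ j, MeasurableSet (S j) := fun j => measurableSet_spanningSets μ j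
  let A : ℚ × ℕ → Set (Z × X) := fun i => {w | ENNReal.ofReal i.1 < f w} ∩ {w | w.2 ∈ S i.2}
  have Am : ∀ i, MeasurableSet (A i) := fun i =>
    (measurableSet_lt measurable_const hf).inter (measurable_snd (Sm i.2))
  let B : ℚ × ℕ → Z → Set X := fun i z => {x | (z, x) ∈ A i}
  have Bm : ∀ i z, MeasurableSet (B i z) := fun i z => measurable_prodMk_left (Am i)
  have BS : ∀ i z, B i z ⊆ S i.2 := fun i z x hx => hx.2
  have Bf : ∀ i z, μ (B i z) ≠ ∞ := fun i z =>
    ((measure_mono (BS i z)).trans_lt (measure_spanningSets_lt_top μ _)).ne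
  have Mm : ∀ i, Measurable fun z => μ (B i z) := fun i => measurable_measure_prodMk_left (Am i)
  let g : ℚ × ℕ → Z × X → ℝ≥0∞ := fun i w =>
    if μ (B i w.1) = 0 then 0 else (A i).indicator (fun w => (μ (B i w.1))⁻¹) w
  have gm : ∀ i, Measurable (g i) := fun i => by
    refine Measurable.ite (((Mm i).comp measurable_fst) (measurableSet_singleton 0)) measurable_const ?_
    exact ((Mm i).comp measurable_fst).inv.indicator (Am i)
  have gsec : ∀ i z, μ (B i z) ≠ 0 → ∀ x, g i (z,x) = (B i z).indicator (fun _ => (μ (B i z))⁻¹) x := by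
    intro i z hz x
    simp only [g, hz, if_false]
    by_cases hx : (z, x) ∈ A i
    · rw [Set.indicator_of_mem hx, Set.indicator_of_mem (show x ∈ B i z from hx)]
    · rw [Set.indicator_of_notMem hx, Set.indicator_of_notMem (show x ∉ B i z from hx)]
  have gsec0 : ∀ i z, μ (B i z) = 0 → ∀ x, g i (z,x) = 0 := by
    intro i z hz x
    simp only [g, hz, if_true]
  refine norming_glue (ι := ℚ × ℕ) μ (LN ∞ μ) (LN 1 μ) f hf g gm ?_ ?_ ?_
  · rintro i ⟨z, x⟩
    by_cases hz : μ (B i z) = 0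
    · simp [gsec0 i z hz]
    · rw [gsec i z hz]
      refine ne_top_of_le_ne_top (ENNReal.inv_ne_top.2 hz) (Set.indicator_le_self _ _ x)
  · intro i z
    rw [LN_one]
    by_cases hz : μ (B i z) = 0
    · simp [gsec0 i z hz]
    · simp only [gsec i z hz]
      rw [lintegral_indicator_const (Bm i z), ENNReal.inv_mul_cancel hz (Bf i z)]
  · intro z
    rw [LN_top]
    refine le_of_forall_lt fun c hc => ?_
    obtain ⟨t, -, ht1, ht2⟩ := ENNReal.lt_iff_exists_rat_btwn.1 hc
    have hpos : ∃ j, μ (B (t, j) z) ≠ 0 := by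
      by_contra hcon
      push Not at hcon
      have h0 : μ (⋃ j, B (t, j) z) = 0 := measure_iUnion_null hcon
      have : essSup (fun x => f (z, x)) μ ≤ ENNReal.ofReal t := by
        refine essSup_le_of_ae_le _ ?_
        rw [Filter.EventuallyLE, ae_iff]
        refine measure_mono_null ?_ h0
        intro x hx
        have hx' : ENNReal.ofReal t < f (z, x) := not_le.1 hx
        have : x ∈ ⋃ j, S j := by rw [iUnion_spanningSets]; trivial
        obtain ⟨j, hj⟩ := Set.mem_iUnion.1 this
        exact Set.mem_iUnion.2 ⟨j, hx', hj⟩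
      exact absurd ht2 (not_lt.2 this)
    obtain ⟨j, hj⟩ := hpos
    refine lt_of_lt_of_le ht1 (le_trans ?_ (le_iSup _ (t, j)))
    calc ENNReal.ofReal t = ENNReal.ofReal t * ((μ (B (t,j) z))⁻¹ * μ (B (t,j) z)) := by
          rw [ENNReal.inv_mul_cancel hj (Bf _ z), mul_one]
      _ = ∫⁻ x, ENNReal.ofReal t * g (t,j) (z,x) ∂μ := by
          rw [lintegral_const_mul' _ _ ENNReal.ofReal_ne_top]
          simp only [gsec _ z hj]
          rw [lintegral_indicator_const (Bm _ z)]
      _ ≤ _ := by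
          refine lintegral_mono fun x => ?_
          show _ * g (t,j) (z,x) ≤ _ * g (t,j) (z,x)
          rw [gsec _ z hj]
          by_cases hx : x ∈ B (t,j) z
          · gcongr
            exact hx.1.le
          · simp [Set.indicator_of_notMem hx]

theorem LN_norming_mid {X : Type} [MeasurableSpace X] (μ : Measure X) [SigmaFinite μ]
    {q q' : ℝ≥0∞} (h1 : q ≠ ∞) (h2 : q' ≠ ∞) (h3 : q.toReal.HolderConjugate q'.toReal)
    (Z : Type) [MeasurableSpace Z] (f : Z × X → ℝ≥0∞) (hf : Measurable f) :
    ∃ g : ℕ → Z × X → ℝ≥0∞, (∀ m, Measurable (g m)) ∧ (∀ m w, g m w ≠ ∞) ∧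
      (∀ m z, LN q' μ (fun x => g m (z, x)) ≤ 1) ∧
      (∀ z, Monotone fun m => ∫⁻ x, f (z, x) * g m (z, x) ∂μ) ∧
      ∀ z, LN q μ (fun x => f (z, x)) ≤ ⨆ m, ∫⁻ x, f (z, x) * g m (z, x) ∂μ := by
  classical
  let S := spanningSets μ
  have Sm : ∀ j, MeasurableSet (S j) := fun j => measurableSet_spanningSets μ j
  set a := q.toReal with ha
  set b := q'.toReal with hb
  have a0 : 0 < a := h3.pos
  have b0 : 0 < b := h3.symm.pos
  have a1 : 0 < a - 1 := h3.sub_one_pos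
  let T : ℕ → Set (Z × X) := fun m => {w | w.2 ∈ S m}
  have Tm : ∀ m, MeasurableSet (T m) := fun m => measurable_snd (Sm m)
  let h : ℕ → Z × X → ℝ≥0∞ := fun m => (T m).indicator (fun w => min (f w) m)
  have hm : ∀ m, Measurable (h m) := fun m => (hf.min measurable_const).indicator (Tm m)
  have hmono : ∀ w, Monotone fun m => h m w := by
    intro w m m' hmm
    by_cases hw : w ∈ T m
    · have hw' : w ∈ T m' := monotone_spanningSets μ hmm hw
      simp only [h]
      rw [Set.indicator_of_mem hw, Set.indicator_of_mem hw']
      refine min_le_min le_rfl ?_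
      exact_mod_cast hmm
    · simp only [h]
      rw [Set.indicator_of_notMem hw]
      exact zero_le
  have hle : ∀ m w, h m w ≤ f w := fun m w =>
    (Set.indicator_le_self _ _ w).trans (min_le_left _ _)
  have hlem : ∀ m w, h m w ≤ m := fun m w =>
    (Set.indicator_le_self _ _ w).trans (min_le_right _ _)
  have hne : ∀ m w, h m w ≠ ∞ := fun m w => ne_top_of_le_ne_top (ENNReal.natCast_ne_top m) (hlem m w)
  have hsup : ∀ w, ⨆ m, h m w = f w := by
    intro w
    refine le_antisymm (iSup_le fun m => hle m w) ?_
    have : w.2 ∈ ⋃ j, S j := by rw [iUnion_spanningSets]; trivial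
    obtain ⟨j, hj⟩ := Set.mem_iUnion.1 this
    calc f w = f w ⊓ ⨆ m : ℕ, (m : ℝ≥0∞) := by simp [ENNReal.iSup_natCast]
      _ = ⨆ m : ℕ, f w ⊓ (m : ℝ≥0∞) := inf_iSup_eq _ _
      _ ≤ _ := by
        refine iSup_le fun m => le_trans ?_ (le_iSup _ (max m j))
        have : w ∈ T (max m j) := monotone_spanningSets μ (le_max_right m j) hj
        simp only [h]
        rw [Set.indicator_of_mem this]
        refine min_le_min le_rfl ?_
        exact_mod_cast le_max_left m j
  let A : ℕ → Z → ℝ≥0∞ := fun m z => ∫⁻ x, h m (z, x) ^ a ∂μ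
  have Am : ∀ m, Measurable (A m) := fun m =>
    Measurable.lintegral_prod_right' (f := fun w => h m w ^ a) ((hm m).pow_const a)
  have Af : ∀ m z, A m z ≠ ∞ := by
    intro m z
    have : A m z ≤ (m:ℝ≥0∞) ^ a * μ (S m) := by
      rw [← lintegral_indicator_const (Sm m)]
      refine lintegral_mono fun x => ?_
      by_cases hx : x ∈ S m
      · rw [Set.indicator_of_mem hx]
        exact ENNReal.rpow_le_rpow (hlem _ _) a0.le
      · have : h m (z, x) = 0 := Set.indicator_of_notMem (show (z,x) ∉ T m from hx) _
        rw [this, ENNReal.zero_rpow_of_pos a0]; exact zero_le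
    exact ne_top_of_le_ne_top (ENNReal.mul_ne_top
      (ENNReal.rpow_ne_top_of_nonneg a0.le (ENNReal.natCast_ne_top m))
      (measure_spanningSets_lt_top μ m).ne) this
  let g : ℕ → Z × X → ℝ≥0∞ := fun m w =>
    if A m w.1 = 0 then 0 else A m w.1 ^ (-(1/b)) * h m w ^ (a - 1)
  have gm : ∀ m, Measurable (g m) := fun m =>
    Measurable.ite (((Am m).comp measurable_fst) (measurableSet_singleton 0)) measurable_const
      ((((Am m).comp measurable_fst).pow_const _).mul ((hm m).pow_const _))
  have gs0 : ∀ m z, A m z = 0 → ∀ x, g m (z, x) = 0 := by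
    intro m z hz x; simp only [g, hz, if_true]
  have gs : ∀ m z, A m z ≠ 0 → ∀ x, g m (z, x) = A m z ^ (-(1/b)) * h m (z, x) ^ (a - 1) := by
    intro m z hz x; simp only [g, hz, if_false]
  have cfin : ∀ m z, A m z ≠ 0 → A m z ^ (-(1/b)) ≠ ∞ := fun m z hz =>
    ENNReal.rpow_ne_top_of_ne_zero hz (Af m z)
  refine norming_glue (ι := ℕ) μ (LN q μ) (LN q' μ) f hf g gm ?_ ?_ ?_
  · rintro m ⟨z, x⟩
    by_cases hz : A m z = 0
    · simp [gs0 m z hz]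
    · rw [gs m z hz]
      exact ENNReal.mul_ne_top (cfin m z hz) (ENNReal.rpow_ne_top_of_nonneg a1.le (hne _ _))
  · intro m z
    simp only [LN, h2, if_false]
    rw [← hb]
    by_cases hz : A m z = 0
    · simp [gs0 m z hz, b0]
    · simp only [gs m z hz]
      simp only [ENNReal.mul_rpow_of_nonneg _ _ b0.le, ← ENNReal.rpow_mul]
      rw [lintegral_const_mul' _ _ (ENNReal.rpow_ne_top_of_ne_zero hz (Af m z)),
        h3.sub_one_mul_conj]
      have : -(1/b) * b = -1 := by field_simp
      rw [this, ENNReal.rpow_neg_one]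
      change ((A m z)⁻¹ * A m z) ^ (1/b) ≤ 1
      rw [ENNReal.inv_mul_cancel hz (Af m z), ENNReal.one_rpow]
  · intro z
    simp only [LN, h1, if_false]
    rw [← ha]
    have e1 : ∫⁻ x, f (z, x) ^ a ∂μ = ⨆ m, A m z := by
      have : ∀ x, f (z, x) ^ a = ⨆ m, h m (z, x) ^ a := by
        intro x
        rw [← hsup]
        exact (ENNReal.orderIsoRpow a a0).map_iSup _
      simp only [this]
      rw [lintegral_iSup (f := fun m x => h m (z, x) ^ a) (fun m => ((hm m).comp measurable_prodMk_left).pow_const a)]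
      intro m m' hmm x
      exact ENNReal.rpow_le_rpow (hmono _ hmm) a0.le
    rw [e1]
    have e2 : (⨆ m, A m z) ^ (1/a) = ⨆ m, (A m z) ^ (1/a) :=
      (ENNReal.orderIsoRpow (1/a) (by positivity)).map_iSup _
    rw [e2]
    refine iSup_mono fun m => ?_
    by_cases hz : A m z = 0
    · rw [hz, ENNReal.zero_rpow_of_pos (by positivity)]; exact zero_le
    · calc A m z ^ (1/a) = A m z ^ (-(1/b)) * A m z := by
            have hab : 1/a = -(1/b) + 1 := by
              have := h3.inv_add_inv_eq_one
              simp only [one_div]; linarith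
            rw [hab, ENNReal.rpow_add _ _ hz (Af m z), ENNReal.rpow_one]
        _ = ∫⁻ x, A m z ^ (-(1/b)) * h m (z, x) ^ a ∂μ := by
            rw [lintegral_const_mul' _ _ (cfin m z hz)]
        _ ≤ _ := by
            refine lintegral_mono fun x => ?_
            show _ ≤ f (z, x) * g m (z, x)
            rw [gs m z hz]
            have : h m (z,x) ^ a = h m (z,x) * h m (z,x) ^ (a-1) := by
              conv_rhs => enter [1]; rw [← ENNReal.rpow_one (h m (z,x))]
              rw [← ENNReal.rpow_add_of_nonneg _ _ zero_le_one a1.le]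
              congr 1; ring
            rw [this, mul_left_comm]
            gcongr
            exact hle _ _

theorem LN_core {X : Type} [MeasurableSpace X] (μ : Measure X) [SigmaFinite μ]
    {q q' : ℝ≥0∞} (h : 1 / q + 1 / q' = 1) : HCore μ (LN q μ) (LN q' μ) where
  holder := LN_holder μ h
  mono := LN_mono q' μ
  smul c hc f := by
    refine LN_smul q' ?_ μ c hc f
    rintro rfl
    simp at h
  norming Z _ f hf := by
    rcases conj_cases h with ⟨rfl, rfl⟩ | ⟨rfl, rfl⟩ | ⟨h1, h2, h3⟩
    · refine ⟨fun _ _ => 1, fun _ => measurable_const, by simp, ?_, ?_, ?_⟩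
      · intro m z
        rw [LN_top]
        exact essSup_le_of_ae_le _ (Eventually.of_forall fun _ => le_rfl)
      · intro z; exact monotone_const
      · intro z; simp [LN_one]
    · exact LN_norming_top μ Z f hf
    · exact LN_norming_mid μ h1 h2 h3 Z f hf

theorem lpZNorm_eq (p : ℝ≥0∞) : lpZNorm p = LN p (Measure.count : Measure ℤ) := by
  funext a
  unfold lpZNorm LN
  rw [essSup_count, lintegral_count]

theorem herzRing_meas (k : ℤ) : MeasurableSet (herzRing k) :=
  measurableSet_Ioo.diff measurableSet_Ioo

theorem lqNormOn_eq (q : ℝ≥0∞) (s : Set ℝ) (hs : MeasurableSet s) :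
    lqNormOn q s = LN q (volume.restrict s) := by
  funext a
  unfold lqNormOn LN
  rw [ENNReal.essSup_indicator_eq_essSup_restrict hs]

theorem mem_herzRing (k : ℤ) (x : ℝ) : x ∈ herzRing k ↔ (2:ℝ)^(k-1) ≤ |x| ∧ |x| < (2:ℝ)^k := by
  unfold herzRing
  rw [Set.mem_diff, Set.mem_Ioo, Set.mem_Ioo, ← abs_lt, ← abs_lt, not_lt, and_comm]

theorem herzRing_disj : Pairwise (Function.onFun Disjoint herzRing) := by
  have key : ∀ i j : ℤ, i < j → Disjoint (herzRing i) (herzRing j) := by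
    intro i j hij
    rw [Set.disjoint_left]
    intro x hx hy
    rw [mem_herzRing] at hx hy
    have : (2:ℝ)^i ≤ (2:ℝ)^(j-1) := zpow_le_zpow_right₀ (by norm_num) (by omega)
    linarith [hx.2, hy.1]
  intro i j hij
  rcases lt_or_gt_of_ne hij with h | h
  · exact key i j h
  · exact (key j i h).symm

theorem herzRing_union : ⋃ k, herzRing k = {0}ᶜ := by
  ext x
  simp only [Set.mem_iUnion, mem_herzRing, Set.mem_compl_iff, Set.mem_singleton_iff]
  constructor
  · rintro ⟨k, h1, h2⟩ rfl
    have : (0:ℝ) < 2^(k-1) := by positivity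
    simp at h1
    linarith
  · intro hx
    obtain ⟨k, h1, h2⟩ := exists_mem_Ico_zpow (abs_pos.2 hx) (one_lt_two (α := ℝ))
    exact ⟨k+1, by simpa using h1, h2⟩

theorem lint_rings (f : ℝ → ℝ≥0∞) : ∫⁻ x, f x = ∑' k, ∫⁻ x in herzRing k, f x := by
  rw [← lintegral_iUnion herzRing_meas herzRing_disj, herzRing_union, restrict_compl_singleton]

def hw (α : ℝ) (k : ℤ) : ℝ≥0∞ := ENNReal.ofReal ((2 : ℝ) ^ ((k : ℝ) * α))

theorem hw_ne_top (α : ℝ) (k : ℤ) : hw α k ≠ ∞ := ENNReal.ofReal_ne_top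

theorem hw_mul (α : ℝ) (k : ℤ) : hw α k * hw (-α) k = 1 := by
  unfold hw
  rw [← ENNReal.ofReal_mul (by positivity), ← Real.rpow_add (by norm_num)]
  simp

theorem herz1_eq (α : ℝ) (p q : ℝ≥0∞) (g : ℝ → ℝ≥0∞) : herzNorm1 α p q g =
    LN p Measure.count fun k => hw α k * LN q (volume.restrict (herzRing k)) g := by
  unfold herzNorm1
  rw [lpZNorm_eq]
  simp only [lqNormOn_eq q _ (herzRing_meas _)]
  rfl

theorem LN_congr {X : Type} [MeasurableSpace X] (q : ℝ≥0∞) (μ : Measure X) (f g : X → ℝ≥0∞)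
    (h : f =ᵐ[μ] g) : LN q μ f = LN q μ g := by
  unfold LN
  rw [essSup_congr_ae h]
  have : ∫⁻ x, f x ^ q.toReal ∂μ = ∫⁻ x, g x ^ q.toReal ∂μ :=
    lintegral_congr_ae (h.mono fun x hx => by simp only [hx])
  rw [this]

theorem herz1_core (α : ℝ) {p q p' q' : ℝ≥0∞} (hp : 1 / p + 1 / p' = 1)
    (hq : 1 / q + 1 / q' = 1) :
    HCore (volume : Measure ℝ) (herzNorm1 α p q) (herzNorm1 (-α) p' q') := by
  have P := LN_core (Measure.count : Measure ℤ) hp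
  have Q := fun k => LN_core (volume.restrict (herzRing k)) hq
  refine ⟨?_, ?_, ?_, ?_⟩
  · intro f g hf hg
    rw [lint_rings, herz1_eq, herz1_eq]
    refine le_trans ?_ (P.holder _ _ (measurable_of_countable _) (measurable_of_countable _))
    rw [lintegral_count]
    refine ENNReal.tsum_le_tsum fun k => ?_
    refine ((Q k).holder f g hf hg).trans_eq ?_
    rw [mul_mul_mul_comm, hw_mul, one_mul]
  · intro f g h
    rw [herz1_eq, herz1_eq]
    exact P.mono _ _ fun k => mul_le_mul_right ((Q k).mono _ _ h) _
  · intro c hc f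
    rw [herz1_eq, herz1_eq, ← P.smul c hc]
    congr 1
    funext k
    rw [(Q k).smul c hc, mul_left_comm]
  · intro Z _ f hf
    choose g gm gf g1 gmono gs using fun k => (Q k).norming Z f hf
    let h : Z × ℤ → ℝ≥0∞ := fun w => hw α w.2 *
      LN q (volume.restrict (herzRing w.2)) fun x => f (w.1, x)
    have hh : Measurable h := by
      refine measurable_from_prod_countable_left fun k => ?_
      exact ((Q k).meas f hf).const_mul (hw α k)
    obtain ⟨u, um, uf, u1, -, us⟩ := P.norming Z h hh
    let c : ℕ → ℤ → Z → ℝ≥0∞ := fun l k z => u l (z, k) * hw α k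
    have cf : ∀ l k z, c l k z ≠ ∞ := fun l k z => ENNReal.mul_ne_top (uf _ _) (hw_ne_top _ _)
    let R : ℤ → Set (Z × ℝ) := fun k => {w | w.2 ∈ herzRing k}
    let G : ℕ × ℕ → Z × ℝ → ℝ≥0∞ := fun i w =>
      ∑' k, (R k).indicator (fun w => c i.1 k w.1 * g k i.2 w) w
    have Gm : ∀ i, Measurable (G i) := fun i => by
      refine Measurable.ennreal_tsum fun k => ?_
      refine Measurable.indicator ?_ (measurable_snd (herzRing_meas k))
      refine Measurable.mul ?_ (gm k i.2)
      exact (((um i.1).comp measurable_prodMk_right).comp measurable_fst).mul_const _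
    have Gr : ∀ i z k x, x ∈ herzRing k → G i (z, x) = c i.1 k z * g k i.2 (z, x) := by
      intro i z k x hx
      simp only [G]
      rw [tsum_eq_single k]
      · rw [Set.indicator_of_mem (show (z, x) ∈ R k from hx)]
      · intro j hj
        refine Set.indicator_of_notMem ?_ _
        intro hx'
        exact Set.disjoint_left.1 (herzRing_disj hj) hx' hx
    refine norming_glue (ι := ℕ × ℕ) volume _ _ f hf G Gm ?_ ?_ ?_
    · rintro i ⟨z, x⟩
      by_cases hx : ∃ k, x ∈ herzRing k
      · obtain ⟨k, hk⟩ := hx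
        rw [Gr i z k x hk]
        exact ENNReal.mul_ne_top (cf _ _ _) (gf _ _ _)
      · push Not at hx
        have : G i (z, x) = 0 := by
          simp only [G]
          rw [ENNReal.tsum_eq_zero]
          exact fun k => Set.indicator_of_notMem (show (z, x) ∉ R k from hx k) _
        rw [this]; exact ENNReal.zero_ne_top
    · rintro ⟨l, m⟩ z
      rw [herz1_eq]
      refine le_trans (P.mono _ _ fun k => ?_) (u1 l z)
      have : LN q' (volume.restrict (herzRing k)) (fun x => G (l, m) (z, x)) =
          LN q' (volume.restrict (herzRing k)) (fun x => c l k z * g k m (z, x)) := by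
        refine LN_congr _ _ _ _ ?_
        exact (ae_restrict_iff' (herzRing_meas k)).2 (Eventually.of_forall fun x hx => Gr _ z k x hx)
      rw [this, (Q k).smul _ (cf _ _ _)]
      calc _ ≤ hw (-α) k * (c l k z * 1) := by
            exact mul_le_mul_right (mul_le_mul_right (g1 k m z) _) _
        _ = (hw α k * hw (-α) k) * u l (z, k) := by simp only [c]; ring
        _ = u l (z, k) := by rw [hw_mul, one_mul]
    · intro z
      rw [herz1_eq]
      refine (us z).trans (iSup_le fun l => ?_)
      have e1 : ∀ k, h (z, k) * u l (z, k) ≤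
          ⨆ m, (∫⁻ x in herzRing k, f (z, x) * g k m (z, x)) * c l k z := by
        intro k
        rw [← ENNReal.iSup_mul]
        calc h (z, k) * u l (z, k) = LN q (volume.restrict (herzRing k)) (fun x => f (z, x)) *
              c l k z := by simp only [h, c]; ring
          _ ≤ _ := mul_le_mul_left (gs k z) _
      refine (lintegral_mono e1).trans ?_
      rw [lintegral_iSup (fun m => measurable_of_countable _)]
      · refine iSup_le fun m => ?_
        refine le_trans ?_ (le_iSup _ (l, m))
        rw [lintegral_count, lint_rings]
        refine ENNReal.tsum_le_tsum fun k => ?_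
        rw [← lintegral_mul_const' _ _ (cf _ _ _)]
        refine le_of_eq (setLIntegral_congr_fun (herzRing_meas k) fun x hx => ?_)
        rw [Gr (l, m) z k x hx]
        ring
      · intro a b hab k
        exact mul_le_mul_left (gmono k z hab) _

theorem mixed_core : ∀ (n : ℕ) (α : Fin n → ℝ) (p q p' q' : Fin n → ℝ≥0∞)
    (_ : ∀ i, 1 / p i + 1 / p' i = 1) (_ : ∀ i, 1 / q i + 1 / q' i = 1),
    HCore (volume : Measure (Fin n → ℝ)) (mixedHerzNormE n α p q) (mixedHerzNormE n (-α) p' q') := by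
  intro n
  induction n with
  | zero =>
    intro α p q p' q' _ _
    have hv : (volume : Measure (Fin 0 → ℝ)) Set.univ = 1 := by
      simp [volume_pi, Measure.pi_of_empty]
    have e0 : ∀ f : (Fin 0 → ℝ) → ℝ≥0∞, ∫⁻ x, f x = f (fun i => i.elim0) := by
      intro f
      rw [lintegral_unique, hv, mul_one]
      try exact congrArg f (Subsingleton.elim _ _)
    refine ⟨?_, ?_, ?_, ?_⟩
    · intro f g _ _
      rw [e0]; exact le_rfl
    · intro f g h; exact h _
    · intro c _ f; rfl
    · intro Z _ f hf
      refine ⟨fun _ _ => 1, fun _ => measurable_const, by simp, ?_, ?_, ?_⟩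
      · intro m z; exact le_rfl
      · intro z; exact monotone_const
      · intro z
        simp only [mul_one, e0]
        simp [mixedHerzNormE]
  | succ n ih =>
    intro α p q p' q' hp hq
    have H := herz1_core (α (Fin.last n)) (hp (Fin.last n)) (hq (Fin.last n))
    have K := ih (Fin.init α) (Fin.init p) (Fin.init q) (Fin.init p') (Fin.init q')
      (fun i => hp _) (fun i => hq _)
    have K' := ih (-Fin.init α) (Fin.init p') (Fin.init q') (Fin.init p) (Fin.init q)
      (fun i => (add_comm _ _).trans (hp _)) (fun i => (add_comm _ _).trans (hq _))
    rw [neg_neg] at K'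
    have C := (H.comp K K').transport _
      (volume_preserving_piFinSuccAbove (fun _ : Fin (n+1) => ℝ) (Fin.last n))
    have e : ∀ (x : ℝ) (y : Fin n → ℝ),
        (MeasurableEquiv.piFinSuccAbove (fun _ : Fin (n+1) => ℝ) (Fin.last n)).symm (x, y) =
          Fin.snoc y x := by
      intro x y
      show Fin.insertNth (α := fun _ => ℝ) (Fin.last n) x y = _
      rw [Fin.insertNth_last']
    simp only [e] at C
    exact C

theorem seq_core (n : ℕ) (r r' : ℝ≥0∞) (hrr : 1 / r + 1 / r' = 1)
    (α : Fin n → ℝ) (p q p' q' : Fin n → ℝ≥0∞)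
    (hp' : ∀ i, 1 / p i + 1 / p' i = 1) (hq' : ∀ i, 1 / q i + 1 / q' i = 1) :
    HCore ((volume : Measure (Fin n → ℝ)).prod (Measure.count : Measure ℤ))
      (fun f => mixedHerzNormE n α p q fun x => lpZNorm r fun j => f (x, j))
      (fun f => mixedHerzNormE n (-α) p' q' fun x => lpZNorm r' fun j => f (x, j)) := by
  rw [lpZNorm_eq, lpZNorm_eq]
  exact (mixed_core n α p q p' q' hp' hq').comp (LN_core _ hrr)
    (LN_core _ ((add_comm _ _).trans hrr))

/-- norm duality for `l^r`-Herz type mixed-norm spaces. -/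
theorem mixedHerz_seq_norm_dual (n : ℕ) (r r' : ℝ≥0∞) (hr : 1 ≤ r)
    (hrr : 1 / r + 1 / r' = 1)
    (α : Fin n → ℝ) (p q p' q' : Fin n → ℝ≥0∞)
    (hp : ∀ i, 1 ≤ p i) (hq : ∀ i, 1 ≤ q i)
    (hp' : ∀ i, 1 / p i + 1 / p' i = 1) (hq' : ∀ i, 1 / q i + 1 / q' i = 1)
    (F : ℤ → (Fin n → ℝ) → ℂ) (hF : ∀ j, Measurable (F j)) :
    herzSeqNorm n r α p q F =
      ⨆ (G : ℤ → (Fin n → ℝ) → ℂ) (_ : ∀ j, Measurable (G j))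
        (_ : herzSeqNorm n r' (-α) p' q' G = 1),
        ∫⁻ x, ∑' j : ℤ, (‖F j x * G j x‖₊ : ℝ≥0∞) := by
  have C := seq_core n r r' hrr α p q p' q' hp' hq'
  have hmeas : ∀ H : ℤ → (Fin n → ℝ) → ℂ, (∀ j, Measurable (H j)) →
      Measurable fun w : (Fin n → ℝ) × ℤ => (‖H w.2 w.1‖₊ : ℝ≥0∞) := by
    intro H hH
    refine measurable_from_prod_countable_left fun j => ?_
    exact (hH j).nnnorm.coe_nnreal_ennreal
  have hint : ∀ g : (Fin n → ℝ) × ℤ → ℝ≥0∞, Measurable g →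
      ∫⁻ w, (‖F w.2 w.1‖₊ : ℝ≥0∞) * g w ∂((volume : Measure (Fin n → ℝ)).prod Measure.count) =
      ∫⁻ x, ∑' j : ℤ, (‖F j x‖₊ : ℝ≥0∞) * g (x, j) := by
    intro g hg
    rw [lintegral_prod (fun w : (Fin n → ℝ) × ℤ => (‖F w.2 w.1‖₊ : ℝ≥0∞) * g w)
      ((hmeas F hF).mul hg).aemeasurable]
    simp only [lintegral_count]
  apply le_antisymm
  · obtain ⟨g, gm, gf, g1, -, gs⟩ := C.norming Unit (fun w => (‖F w.2.2 w.2.1‖₊ : ℝ≥0∞))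
      ((hmeas F hF).comp measurable_snd)
    refine (gs ()).trans (iSup_le fun m => ?_)
    have gm' : Measurable fun w => g m ((), w) := (gm m).comp measurable_prodMk_left
    set N := mixedHerzNormE n (-α) p' q' fun x => lpZNorm r' fun j => g m ((), (x, j)) with hN
    have hN1 : N ≤ 1 := g1 m ()
    by_cases h0 : N = 0
    · refine (C.holder _ _ (hmeas F hF) gm').trans ?_
      show _ * N ≤ _
      rw [h0, mul_zero]; exact zero_le
    have hNt : N ≠ ∞ := ne_top_of_le_ne_top ENNReal.one_ne_top hN1
    have hct : N⁻¹ ≠ ∞ := ENNReal.inv_ne_top.2 h0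
    let G : ℤ → (Fin n → ℝ) → ℂ := fun j x => ((N⁻¹ * g m ((), (x, j))).toReal : ℂ)
    have hG : ∀ j x, (‖G j x‖₊ : ℝ≥0∞) = N⁻¹ * g m ((), (x, j)) := by
      intro j x
      have hfin : N⁻¹ * g m ((), (x, j)) ≠ ∞ := ENNReal.mul_ne_top hct (gf _ _)
      simp only [G]
      rw [← enorm_eq_nnnorm, ← ofReal_norm_eq_enorm, Complex.norm_real, Real.norm_eq_abs,
        abs_of_nonneg ENNReal.toReal_nonneg, ENNReal.ofReal_toReal hfin]
    have hGm : ∀ j, Measurable (G j) := by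
      intro j
      refine Complex.measurable_ofReal.comp (Measurable.ennreal_toReal ?_)
      exact (gm'.comp measurable_prodMk_right).const_mul _
    have hGN : herzSeqNorm n r' (-α) p' q' G = 1 := by
      unfold herzSeqNorm
      simp only [hG]
      refine (C.smul _ hct (fun w => g m ((), w))).trans ?_
      exact ENNReal.inv_mul_cancel h0 hNt
    refine le_trans ?_ (le_iSup₂_of_le G hGm (le_iSup_of_le hGN le_rfl))
    refine (hint _ gm').trans_le ?_
    refine lintegral_mono fun x => ENNReal.tsum_le_tsum fun j => ?_
    rw [nnnorm_mul, ENNReal.coe_mul, hG]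
    refine mul_le_mul_right ?_ _
    exact le_mul_of_one_le_left zero_le (ENNReal.one_le_inv.2 hN1)
  · refine iSup_le fun G => iSup_le fun hG => iSup_le fun hN => ?_
    have := C.holder _ _ (hmeas F hF) (hmeas G hG)
    rw [hint _ (hmeas G hG)] at this
    simp only [nnnorm_mul, ENNReal.coe_mul]
    refine this.trans_eq ?_
    change herzSeqNorm n r α p q F * herzSeqNorm n r' (-α) p' q' G = _
    rw [hN, mul_one]
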